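/- Let N ≥ 1. Suppose for j = 1,…,k, S⁽ʲ⁾ is a stochastic matrix on ℝ^(4^N), Ũ⁽ʲ⁾ is a linear map on ℝ^(2^N), and a_j ≠ 0 satisfy ∂_N ∘ S⁽ʲ⁾ = a_j · Ũ⁽ʲ⁾ ∘ ∂_N. Let Φ⁽⁰⁾ ∈ ℝ^(2^N) and set Φ⁽ʲ⁾ = Ũ⁽ʲ⁾Φ⁽ʲ⁻¹⁾, assuming Φ⁽ᵏ⁾ ≠ 0. Let Q⁽⁰⁾ be a probability vector with ∂_N Q⁽⁰⁾ = a₀·Φ⁽⁰⁾ for some a₀ ≠ 0, and for each j = 1,…,k let Q⁽ʲ⁾ be a probability vector (a refreshed state) satisfying ∂_N Q⁽ʲ⁾ = d_j · ∂_N(S⁽ʲ⁾Q⁽ʲ⁻¹⁾) for some d_j ≠ 0. If additionally the final state is refreshed, i.e., Σ_{σ} Q⁽ᵏ⁾_{(i,σ)} = |(∂_N Q⁽ᵏ⁾)_i| for all i ∈ {0,1}^N, then the final physical probabilities satisfy Σ_{σ ∈ {0,1}^N} Q⁽ᵏ⁾_{(i,σ)} = |Φ⁽ᵏ⁾_i|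 / ‖Φ⁽ᵏ⁾‖₁ for all i, i.e., they are given by the Born-1 rule applied to the exactly propagated state Φ⁽ᵏ⁾. (Deterministic content of the refreshment theorem in the infinite-sample limit.) -/

import Mathlib

open scoped BigOperators

/-- The byte-4 index set of `N` grabits: pairs `(i, σ)` of bit strings. -/
abbrev Byte4 (N : ℕ) := (Fin N → Fin 2) × (Fin N → Fin 2)

/-- The `N`-grabit difference map `∂_N`:
`(∂_N P) i = ∑_σ (-1)^(σ₁+⋯+σ_N) P (i, σ)`. -/
noncomputable def gradMap (N : ℕ) (P : Byte4 N → ℝ) : (Fin N → Fin 2) → ℝ :=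
  fun i => ∑ σ : Fin N → Fin 2, (-1 : ℝ) ^ (∑ j, (σ j : ℕ)) * P (i, σ)

/-- The ℓ¹ norm of a vector on a finite index set. -/
noncomputable def l1norm {α : Type*} [Fintype α] (f : α → ℝ) : ℝ := ∑ a, |f a|

/-- A stochastic matrix: nonnegative entries, each column sums to 1. -/
def IsStochastic {α : Type*} [Fintype α] (S : Matrix α α ℝ) : Prop :=
  (∀ i j, 0 ≤ S i j) ∧ ∀ j, ∑ i, S i j = 1

/-!
Up to a scalar, the difference map turns each stochastic step and each refreshment into the exact
step `U j`, so `∂_N Q_j` stays on the line spanned by `Φ_j`. The Born-1 rule does not see a nonzero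
scalar, and the scalar at the last step is nonzero because the refreshed state has total mass one.
-/

section Propagation

variable {R M F : Type*} [Monoid R] [MulAction R M] [FunLike F M M] [MulActionHomClass F R M M]

theorem exists_eq_smul_of_succ_eq_smul_map {k : ℕ} {U : Fin k → F} {Φ ψ : Fin (k + 1) → M}
    {c₀ : R} {c : Fin k → R} (hΦ : ∀ j, Φ j.succ = U j (Φ j.castSucc)) (hψ₀ : ψ 0 = c₀ • Φ 0)
    (hψ : ∀ j, ψ j.succ = c j • U j (ψ j.castSucc)) (j : Fin (k + 1)) :
    ∃ r : R, ψ j = r • Φ j := by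
  induction j using Fin.induction with
  | zero => exact ⟨c₀, hψ₀⟩
  | succ j ih =>
    obtain ⟨r, hr⟩ := ih
    exact ⟨c j * r, by rw [hψ, hr, map_smul, ← hΦ, mul_smul]⟩

end Propagation

section BornRule

variable {ι κ : Type*} [Fintype ι] [Fintype κ]

/-- The Born-1 rule: the probability of each outcome is its share of the `ℓ¹` norm of the state.
It is identically `0` at the zero state, where the division is by `0`. -/
noncomputable def born1 (f : ι → ℝ) (i : ι) : ℝ := |f i| / l1norm f

theorem l1norm_zero : l1norm (0 : ι → ℝ) = 0 := by
  simp [l1norm]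

theorem l1norm_smul (c : ℝ) (f : ι → ℝ) : l1norm (c • f) = |c| * l1norm f := by
  simp [l1norm, abs_mul, Finset.mul_sum]

theorem born1_smul {c : ℝ} (hc : c ≠ 0) (f : ι → ℝ) : born1 (c • f) = born1 f := by
  ext i
  rw [born1, born1, l1norm_smul, Pi.smul_apply, smul_eq_mul, abs_mul,
    mul_div_mul_left _ _ (abs_ne_zero.mpr hc)]

theorem born1_apply_of_l1norm_eq_one {f : ι → ℝ} (hf : l1norm f = 1) (i : ι) :
    born1 f i = |f i| := by
  rw [born1, hf, div_one]

theorem born1_apply_of_l1norm_smul_eq_one {c : ℝ} {f : ι → ℝ} (h : l1norm (c • f) = 1)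
    (i : ι) : born1 f i = |(c • f) i| := by
  have hc : c ≠ 0 := by
    rintro rfl
    rw [zero_smul, l1norm_zero] at h
    exact zero_ne_one h
  rw [← born1_smul hc, born1_apply_of_l1norm_eq_one h]

theorem l1norm_eq_sum_of_marginal_eq_abs {P : ι × κ → ℝ} {f : ι → ℝ}
    (hP : ∀ i, ∑ σ, P (i, σ) = |f i|) : l1norm f = ∑ b, P b := by
  simp only [l1norm, Fintype.sum_prod_type, hP]

theorem refreshment_born1_general {F : Type*} [FunLike F (ι → ℝ) (ι → ℝ)]
    [MulActionHomClass F ℝ (ι → ℝ) (ι → ℝ)] {k : ℕ} {D : (ι × κ → ℝ) → ι → ℝ}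
    {S : Fin k → (ι × κ → ℝ) → ι × κ → ℝ} {U : Fin k → F} {a : Fin k → ℝ}
    (hSU : ∀ j P, D (S j P) = a j • U j (D P))
    {Φ : Fin (k + 1) → ι → ℝ} (hΦ : ∀ j, Φ j.succ = U j (Φ j.castSucc))
    {Q : Fin (k + 1) → ι × κ → ℝ} {a₀ : ℝ} (hQ₀ : D (Q 0) = a₀ • Φ 0)
    {d : Fin k → ℝ} (hQ : ∀ j, D (Q j.succ) = d j • D (S j (Q j.castSucc)))
    (hmass : ∑ b, Q (Fin.last k) b = 1)
    (hrefreshed : ∀ i, ∑ σ, Q (Fin.last k) (i, σ) = |D (Q (Fin.last k)) i|) (i : ι) :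
    ∑ σ, Q (Fin.last k) (i, σ) = born1 (Φ (Fin.last k)) i := by
  have hDQ (j : Fin k) : D (Q j.succ) = (d j * a j) • U j (D (Q j.castSucc)) := by
    rw [hQ, hSU, mul_smul]
  obtain ⟨c, hc⟩ : ∃ c : ℝ, D (Q (Fin.last k)) = c • Φ (Fin.last k) :=
    exists_eq_smul_of_succ_eq_smul_map (ψ := fun j ↦ D (Q j)) hΦ hQ₀ hDQ (Fin.last k)
  have hnorm : l1norm (c • Φ (Fin.last k)) = 1 := by
    rw [← hc, l1norm_eq_sum_of_marginal_eq_abs hrefreshed, hmass]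
  rw [hrefreshed, hc, born1_apply_of_l1norm_smul_eq_one hnorm]

end BornRule

/-- deterministic content of the refreshment theorem.  If each stochastic
matrix `S j` intertwines with `U j` through `∂_N` up to nonzero `a j`, the exact state is
propagated as `Φ j.succ = U j (Φ j.castSucc)` with `Φ (last k) ≠ 0`, the probability
vectors `Q j` follow the stochastic propagation up to refreshments that rescale the
represented grabit state by nonzero factors `d j`, and the final state is refreshed
(`∑_σ Q_k (i,σ) = |(∂_N Q_k)_i|`), then the final physical probabilities are given by the
Born-1 rule applied to the exactly propagated state:
`∑_σ Q_k (i,σ) = |Φ_k i| / ‖Φ_k‖₁`. -/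
theorem refreshment_born1 (N k : ℕ) (hN : 1 ≤ N)
    (S : Fin k → Matrix (Byte4 N) (Byte4 N) ℝ)
    (U : Fin k → (((Fin N → Fin 2) → ℝ) →ₗ[ℝ] ((Fin N → Fin 2) → ℝ)))
    (a : Fin k → ℝ) (ha : ∀ j, a j ≠ 0)
    (hS : ∀ j, IsStochastic (S j))
    (hintertwine : ∀ (j : Fin k) (R : Byte4 N → ℝ),
      gradMap N ((S j).mulVec R) = a j • (U j) (gradMap N R))
    (Φ : Fin (k + 1) → ((Fin N → Fin 2) → ℝ))
    (hΦrec : ∀ j : Fin k, Φ j.succ = (U j) (Φ j.castSucc))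
    (hΦk : Φ (Fin.last k) ≠ 0)
    (a₀ : ℝ) (ha₀ : a₀ ≠ 0)
    (Q : Fin (k + 1) → (Byte4 N → ℝ))
    (hQprob : ∀ j, (∀ b, 0 ≤ Q j b) ∧ ∑ b, Q j b = 1)
    (hQ0 : gradMap N (Q 0) = a₀ • Φ 0)
    (d : Fin k → ℝ) (hd : ∀ j, d j ≠ 0)
    (hQrec : ∀ j : Fin k,
      gradMap N (Q j.succ) = d j • gradMap N ((S j).mulVec (Q j.castSucc)))
    (hfinal : ∀ i : Fin N → Fin 2,
      ∑ σ : Fin N → Fin 2, Q (Fin.last k) (i, σ) = |gradMap N (Q (Fin.last k)) i|) :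
    ∀ i : Fin N → Fin 2,
      ∑ σ : Fin N → Fin 2, Q (Fin.last k) (i, σ) =
        |Φ (Fin.last k) i| / l1norm (Φ (Fin.last k)) := by
  exact refreshment_born1_general hintertwine hΦrec hQ0 hQrec (hQprob (Fin.last k)).2 hfinal
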